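/- Let ω be a nondecreasing sequence of positive reals tending to +∞, let (n_k) be a sequence of distinct positive integers satisfying Condition A_ω, and let f satisfy the stated conditions with ‖f‖ > 0. Put S_N(x) = Σ_{k=1}^N f(n_k x). Then for every positive integer p, ∫₀¹ ( S_N(x)/(‖f‖√N) )^p dx converges as N → ∞ to the p-th moment of the standard normal distribution, i.e. to p!/((p/2)! 2^{p/2}) if p is even and to 0 if p is odd. -/

import Mathlib

/-!
Discarding the `N ^ (1 / 4)` smallest of the first `N` elements `n k` changes `S_N / √N` by a
quantity tending to zero uniformly, and Condition `A_ω` then rules out every nontrivial linear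
relation among the remaining ones with boundedly many terms and coefficients of polynomial size.
The function `f` has an `L¹` modulus of continuity which is a power of `t`, so its Fejér mean `g` of
degree a large power of `N` is polynomially close to `f` in `L¹`, and `g` may replace `f` in the
`q`-th moment of the sum. In the Fourier expansion of the `q`-th moment of a sum of dilates of `g`
only the trivial relations survive. The exponential moment series of the sum therefore agrees, up to
degree `q`, with a power `φ ^ c` of the moment series of `g`, as if the dilates were independent,
and `φ ^ c` has Gaussian coefficients in the limit: differentiating `φ ^ c` gives a recursion for
its coefficients which becomes the one satisfied by those of `exp (s X² / 2)`.
-/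

open MeasureTheory Filter Real Topology

noncomputable section

/-- `n k` is among the `N` smallest elements of the sequence `n`. -/
def AmongSmallest (n : ℕ → ℕ) (N : ℕ) (k : ℕ) : Prop :=
  {j : ℕ | n j ≤ n k}.ncard ≤ N

/-- Condition `A_ω` with explicit threshold `N₀`. -/
def CondAWith (ω : ℕ → ℝ) (n : ℕ → ℕ) (N₀ : ℕ) : Prop :=
  ∀ N : ℕ, N₀ ≤ N →
    ∀ (r : ℕ) (k : Fin r → ℕ) (a : Fin r → ℤ),
      2 ≤ r → (r : ℝ) ≤ ω N →
      Function.Injective k →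
      (∀ i, a i ≠ 0) →
      (∀ i, (|a i| : ℝ) ≤ (N : ℝ) ^ ω N) →
      (∑ i, a i * (n (k i) : ℤ)) = 0 →
      ∀ i, AmongSmallest n N (k i)

/-- Condition `A_ω`. -/
def CondA (ω : ℕ → ℝ) (n : ℕ → ℕ) : Prop := ∃ N₀, CondAWith ω n N₀

/-! ### Coefficients of large powers of a power series -/

section PowerSeries

open PowerSeries Finset.HasAntidiagonal

/-- The coefficient of `X ^ q` in `exp (s X² / 2)`, that is, the `q`-th moment of the centred normal
law of variance `s` divided by `q!`. -/
def gaussCoeff (s : ℝ) (q : ℕ) : ℝ :=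
  if Even q then s ^ (q / 2) / ((q / 2).factorial * 2 ^ (q / 2)) else 0

lemma gaussCoeff_add_two (s : ℝ) (q : ℕ) :
    gaussCoeff s (q + 2) = gaussCoeff s q * s / (q + 2) := by
  simp only [gaussCoeff, Nat.even_add, even_two, iff_true, Nat.add_div_right q two_pos]
  split_ifs with h
  · obtain ⟨r, rfl⟩ := h.two_dvd
    rw [Nat.mul_div_cancel_left r two_pos, Nat.factorial_succ]
    push_cast
    field_simp
    ring
  · simp

lemma sum_antidiagonal_gaussCoeff (s : ℝ) (q : ℕ) :
    ∑ ij ∈ antidiagonal q, gaussCoeff s ij.1 * (if ij.2 = 1 then s else 0) =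
      gaussCoeff s (q + 1) * (q + 1) := by
  rcases q with _ | q
  · simp [gaussCoeff]
  · rw [Finset.sum_eq_single (q, 1), if_pos rfl, gaussCoeff_add_two]
    · push_cast
      field_simp
      ring
    · rintro ⟨i, j⟩ hij hne
      have hj : j ≠ 1 := by
        rintro rfl
        exact hne (by simpa using hij)
      simp [hj]
    · simp

lemma coeff_succ_pow {R : Type*} [CommSemiring R] (φ : R⟦X⟧) (c q : ℕ) :
    coeff (q + 1) (φ ^ c) * (q + 1) = c * ∑ ij ∈ antidiagonal q,
      coeff ij.1 (φ ^ (c - 1)) * (coeff (ij.2 + 1) φ * (ij.2 + 1)) := by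
  rw [← coeff_derivative, derivative_pow, mul_assoc, ← nsmul_eq_mul, map_nsmul, nsmul_eq_mul,
    coeff_mul]
  simp only [coeff_derivative]

variable {ι : Type*} {l : Filter ι} {φ : ι → ℝ⟦X⟧} {r : ι → ℝ} {s : ℝ}

lemma tendsto_rescaled_coeff_derivative (hr : Tendsto r l atTop)
    (h1 : ∀ i, coeff 1 (φ i) = 0)
    (h2 : Tendsto (fun i => coeff 2 (φ i)) l (𝓝 (s / 2)))
    (hb : ∀ j, IsBoundedUnder (· ≤ ·) l fun i => |coeff j (φ i)|) (j : ℕ) :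
    Tendsto (fun i => coeff (j + 1) (φ i) * (j + 1) * r i / r i ^ j) l
      (𝓝 (if j = 1 then s else 0)) := by
  have hr0 : ∀ᶠ i in l, r i ≠ 0 := hr.eventually_ne_atTop 0
  rcases j with _ | _ | j
  · simp [h1, tendsto_const_nhds]
  · have h : Tendsto (fun i => coeff 2 (φ i) * 2) l (𝓝 s) := by simpa using h2.mul_const 2
    refine h.congr' (hr0.mono fun i hi => ?_)
    field_simp
    norm_num
  · have hinv : Tendsto (fun i => (r i ^ (j + 1))⁻¹ * (j + 3)) l (𝓝 0) := by
      simpa using ((tendsto_pow_atTop j.succ_ne_zero).comp hr).inv_tendsto_atTop.mul_const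
        (j + 3 : ℝ)
    have h := hinv.zero_mul_isBoundedUnder_le (hb (j + 3))
    rw [if_neg (by omega)]
    refine h.congr' (hr0.mono fun i hi => ?_)
    push_cast
    field_simp
    ring

lemma tendsto_natCast_sub_one_div {c : ι → ℕ} {u : ι → ℝ} {a : ℝ} (hu : Tendsto u l atTop)
    (hc : Tendsto (fun i => c i / u i) l (𝓝 a)) :
    Tendsto (fun i => ((c i - 1 : ℕ) : ℝ) / u i) l (𝓝 a) := by
  have hlow : Tendsto (fun i => (c i : ℝ) / u i - (u i)⁻¹) l (𝓝 a) := by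
    simpa using hc.sub hu.inv_tendsto_atTop
  refine tendsto_of_tendsto_of_tendsto_of_le_of_le' hlow hc ?_ ?_ <;>
    filter_upwards [hu.eventually_ge_atTop 0] with i hi
  · rw [← one_div, ← sub_div]
    gcongr
    exact_mod_cast Int.le_natCast_sub (c i) 1
  · gcongr
    exact Nat.sub_le _ _

lemma tendsto_coeff_pow (hr : Tendsto r l atTop)
    (h0 : ∀ i, coeff 0 (φ i) = 1) (h1 : ∀ i, coeff 1 (φ i) = 0)
    (h2 : Tendsto (fun i => coeff 2 (φ i)) l (𝓝 (s / 2)))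
    (hb : ∀ j, IsBoundedUnder (· ≤ ·) l fun i => |coeff j (φ i)|)
    {c : ι → ℕ} (hc : Tendsto (fun i => c i / r i ^ 2) l (𝓝 1)) (q : ℕ) :
    Tendsto (fun i => coeff q (φ i ^ c i) / r i ^ q) l (𝓝 (gaussCoeff s q)) := by
  induction q using Nat.strong_induction_on generalizing c with
  | _ q ih =>
  rcases q with _ | q
  · have h0' : ∀ i, coeff 0 (φ i ^ c i) = 1 := fun i => by
      simpa using congrArg (· ^ c i) (h0 i)
    simp [h0', gaussCoeff, tendsto_const_nhds]
  · have hr2 : Tendsto (fun i => r i ^ 2) l atTop := (tendsto_pow_atTop two_ne_zero).comp hr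
    have hc' := tendsto_natCast_sub_one_div hr2 hc
    have hsum : Tendsto (fun i => (c i / r i ^ 2 * ∑ ij ∈ antidiagonal q,
        coeff ij.1 (φ i ^ (c i - 1)) / r i ^ ij.1 *
          (coeff (ij.2 + 1) (φ i) * (ij.2 + 1) * r i / r i ^ ij.2)) / (q + 1 : ℝ)) l
        (𝓝 ((1 * ∑ ij ∈ antidiagonal q,
          gaussCoeff s ij.1 * (if ij.2 = 1 then s else 0)) / (q + 1 : ℝ))) := by
      refine (hc.mul (tendsto_finsetSum _ fun ij hij => ?_)).div_const _
      exact (ih ij.1 (by grind [mem_antidiagonal]) hc').mul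
        (tendsto_rescaled_coeff_derivative hr h1 h2 hb ij.2)
    rw [sum_antidiagonal_gaussCoeff, one_mul, mul_div_cancel_right₀ _ (by positivity)] at hsum
    refine hsum.congr' ((hr.eventually_ne_atTop 0).mono fun i hi => ?_)
    rw [div_eq_div_iff (by positivity) (by positivity), mul_right_comm, coeff_succ_pow,
      Finset.mul_sum, Finset.mul_sum]
    refine Finset.sum_congr rfl fun ij hij => ?_
    rw [← mem_antidiagonal.1 hij]
    field_simp
    ring

end PowerSeries

/-! ### Moments -/

section Moments

variable {Ω : Type*} [MeasurableSpace Ω] {μ : Measure Ω}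

/-- The series `∑ i, (∫ X ^ i) T ^ i / i!`, the formal counterpart of the moment generating function
of `X`. -/
def momentSeries (μ : Measure Ω) (X : Ω → ℝ) : PowerSeries ℝ :=
  PowerSeries.mk fun i => (∫ x, X x ^ i ∂μ) / i.factorial

lemma coeff_momentSeries (X : Ω → ℝ) (q : ℕ) :
    PowerSeries.coeff q (momentSeries μ X) = (∫ x, X x ^ q ∂μ) / q.factorial :=
  PowerSeries.coeff_mk _ _

lemma integral_pow_eq_factorial_mul_coeff (X : Ω → ℝ) (q : ℕ) :
    ∫ x, X x ^ q ∂μ = q.factorial * PowerSeries.coeff q (momentSeries μ X) := by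
  rw [coeff_momentSeries, mul_div_cancel₀ _ (by positivity)]

lemma momentSeries_zero [IsProbabilityMeasure μ] : momentSeries μ (fun _ => 0) = 1 := by
  ext q
  rcases eq_or_ne q 0 with rfl | hq <;> simp [coeff_momentSeries, PowerSeries.coeff_one, *]

open Finset.HasAntidiagonal in
lemma coeff_momentSeries_add {U V : Ω → ℝ} {q : ℕ}
    (hint : ∀ i j, i + j = q → Integrable (fun x => U x ^ i * V x ^ j) μ)
    (huncorr : ∀ i j, i + j = q →
      ∫ x, U x ^ i * V x ^ j ∂μ = (∫ x, U x ^ i ∂μ) * ∫ x, V x ^ j ∂μ) :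
    PowerSeries.coeff q (momentSeries μ (fun x => U x + V x)) =
      PowerSeries.coeff q (momentSeries μ U * momentSeries μ V) := by
  simp only [coeff_momentSeries, PowerSeries.coeff_mul, (Commute.all (U _) (V _)).add_pow',
    nsmul_eq_mul]
  rw [integral_finsetSum _ fun ij hij => (hint _ _ (mem_antidiagonal.1 hij)).const_mul _,
    Finset.sum_div]
  refine Finset.sum_congr rfl fun ij hij => ?_
  obtain rfl := mem_antidiagonal.1 hij
  rw [integral_const_mul, huncorr _ _ rfl, Nat.cast_add_choose]
  have := (ij.1 + ij.2).factorial_ne_zero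
  field_simp

lemma abs_integral_pow_le [IsProbabilityMeasure μ] {X : Ω → ℝ} {C : ℝ} (hX : ∀ x, |X x| ≤ C)
    (q : ℕ) : |∫ x, X x ^ q ∂μ| ≤ C ^ q := by
  have hpow : ∀ x, ‖X x ^ q‖ ≤ C ^ q := fun x => by
    rw [norm_pow]
    exact pow_le_pow_left₀ (norm_nonneg _) (hX x) q
  simpa using norm_integral_le_of_norm_le_const (μ := μ) (.of_forall hpow)

lemma tendsto_coeff_momentSeries_pow [IsProbabilityMeasure μ] {ι : Type*} {l : Filter ι}
    {X : ι → Ω → ℝ} {C s : ℝ} (hX : ∀ i x, |X i x| ≤ C) (hmean : ∀ i, ∫ x, X i x ∂μ = 0)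
    (hvar : Tendsto (fun i => ∫ x, X i x ^ 2 ∂μ) l (𝓝 s))
    {r : ι → ℝ} (hr : Tendsto r l atTop)
    {c : ι → ℕ} (hc : Tendsto (fun i => c i / r i ^ 2) l (𝓝 1)) (q : ℕ) :
    Tendsto (fun i => PowerSeries.coeff q (momentSeries μ (X i) ^ c i) / r i ^ q) l
      (𝓝 (gaussCoeff s q)) := by
  refine tendsto_coeff_pow hr (fun i => ?_) (fun i => ?_) ?_ (fun j => ?_) hc q
  · simp [coeff_momentSeries]
  · simp [coeff_momentSeries, hmean]
  · simpa [coeff_momentSeries] using hvar.div_const 2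
  · refine isBoundedUnder_of ⟨C ^ j / j.factorial, fun i => ?_⟩
    rw [coeff_momentSeries, abs_div, Nat.abs_cast]
    gcongr
    exact abs_integral_pow_le (hX i) j

lemma integrable_pow_of_abs_le [IsFiniteMeasure μ] {X : Ω → ℝ} {C : ℝ}
    (hX : AEStronglyMeasurable X μ) (hC : ∀ x, |X x| ≤ C) (q : ℕ) :
    Integrable (fun x => X x ^ q) μ :=
  .of_bound (hX.pow q) (C ^ q) <| .of_forall fun x => by
    rw [norm_pow]
    exact pow_le_pow_left₀ (norm_nonneg _) (hC x) q

lemma abs_integral_pow_sub_le [IsFiniteMeasure μ] {X Y : Ω → ℝ} {K : ℝ}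
    (hX : AEStronglyMeasurable X μ) (hY : AEStronglyMeasurable Y μ)
    (hXK : ∀ x, |X x| ≤ K) (hYK : ∀ x, |Y x| ≤ K) (q : ℕ) :
    |∫ x, X x ^ q ∂μ - ∫ x, Y x ^ q ∂μ| ≤ q * K ^ (q - 1) * ∫ x, |X x - Y x| ∂μ := by
  have hXq := integrable_pow_of_abs_le hX hXK
  have hYq := integrable_pow_of_abs_le hY hYK
  have hXY : Integrable (fun x => |X x - Y x|) μ := by
    simpa only [pow_one, Pi.sub_apply] using ((hXq 1).sub (hYq 1)).abs
  rw [← integral_sub (hXq q) (hYq q), ← integral_const_mul]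
  refine abs_integral_le_integral_abs.trans
    (integral_mono ((hXq q).sub (hYq q)).abs (hXY.const_mul _) fun x => ?_)
  have hmax : max |X x| |Y x| ^ (q - 1) ≤ K ^ (q - 1) :=
    pow_le_pow_left₀ (le_max_of_le_left (abs_nonneg _)) (max_le (hXK x) (hYK x)) _
  calc |X x ^ q - Y x ^ q| ≤ |X x - Y x| * q * max |X x| |Y x| ^ (q - 1) := abs_pow_sub_pow_le _ _ _
    _ ≤ |X x - Y x| * q * K ^ (q - 1) := by gcongr
    _ = q * K ^ (q - 1) * |X x - Y x| := by ring

lemma tendsto_integral_pow_of_tendsto_integral_abs_sub [IsFiniteMeasure μ] {ι : Type*}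
    {l : Filter ι} {X : ι → Ω → ℝ} {Y : Ω → ℝ} {K : ℝ}
    (hX : ∀ i, AEStronglyMeasurable (X i) μ) (hY : AEStronglyMeasurable Y μ)
    (hXK : ∀ i x, |X i x| ≤ K) (hYK : ∀ x, |Y x| ≤ K)
    (h : Tendsto (fun i => ∫ x, |X i x - Y x| ∂μ) l (𝓝 0)) (q : ℕ) :
    Tendsto (fun i => ∫ x, X i x ^ q ∂μ) l (𝓝 (∫ x, Y x ^ q ∂μ)) := by
  have hzero := h.const_mul (q * K ^ (q - 1))
  rw [mul_zero] at hzero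
  exact tendsto_sub_nhds_zero_iff.1 <| squeeze_zero_norm
    (fun i => abs_integral_pow_sub_le (hX i) hY (hXK i) hYK q) hzero

lemma abs_pow_sub_pow_le_of_abs_sub_le {y z η : ℝ} (hη : η ≤ 1) (h : |z - y| ≤ η) (q : ℕ) :
    |z ^ q - y ^ q| ≤ η * (q * 2 ^ (2 * q - 1) * (1 + y ^ (2 * q))) := by
  have hη0 : 0 ≤ η := (abs_nonneg _).trans h
  have hz : |z| ≤ 1 + |y| := by linarith [abs_sub_abs_le_abs_sub z y]
  have hmax : max |z| |y| ^ (q - 1) ≤ (1 + |y|) ^ (2 * q) :=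
    (pow_le_pow_left₀ (le_max_of_le_left (abs_nonneg _)) (max_le hz (by linarith)) _).trans
      (pow_le_pow_right₀ (by linarith [abs_nonneg y]) (by omega))
  have hconv : (1 + |y|) ^ (2 * q) ≤ 2 ^ (2 * q - 1) * (1 + y ^ (2 * q)) := by
    have := add_pow_le zero_le_one (abs_nonneg y) (2 * q)
    rwa [one_pow, (even_two_mul q).pow_abs] at this
  calc |z ^ q - y ^ q| ≤ |z - y| * q * max |z| |y| ^ (q - 1) := abs_pow_sub_pow_le _ _ _
    _ ≤ η * q * (2 ^ (2 * q - 1) * (1 + y ^ (2 * q))) := by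
      gcongr
      exact hmax.trans hconv
    _ = _ := by ring

lemma tendsto_integral_pow_of_abs_sub_le [IsFiniteMeasure μ] {ι : Type*} {l : Filter ι}
    {Y Z : ι → Ω → ℝ} (hY : ∀ i q, Integrable (fun x => Y i x ^ q) μ)
    (hZ : ∀ i q, Integrable (fun x => Z i x ^ q) μ) {η : ι → ℝ} (hη : Tendsto η l (𝓝 0))
    (hYZ : ∀ i x, |Z i x - Y i x| ≤ η i) {m : ℕ → ℝ}
    (hm : ∀ q, Tendsto (fun i => ∫ x, Y i x ^ q ∂μ) l (𝓝 (m q))) (q : ℕ) :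
    Tendsto (fun i => ∫ x, Z i x ^ q ∂μ) l (𝓝 (m q)) := by
  have hint : ∀ i, Integrable (fun x => 1 + Y i x ^ (2 * q)) μ := fun i =>
    (integrable_const 1).add (hY i (2 * q))
  have hmom : Tendsto (fun i => ∫ x, (1 + Y i x ^ (2 * q)) ∂μ) l
      (𝓝 (μ.real Set.univ + m (2 * q))) := by
    simpa [integral_add (integrable_const (1 : ℝ)) (hY _ (2 * q))] using (hm (2 * q)).const_add _
  have hdiff : Tendsto (fun i => ∫ x, Z i x ^ q ∂μ - ∫ x, Y i x ^ q ∂μ) l (𝓝 0) := by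
    have hzero := hη.mul (hmom.const_mul (q * 2 ^ (2 * q - 1) : ℝ))
    rw [zero_mul] at hzero
    refine squeeze_zero_norm' ((hη.eventually_le_const one_pos).mono fun i hi => ?_) hzero
    rw [← integral_sub (hZ i q) (hY i q), ← integral_const_mul, ← integral_const_mul]
    refine abs_integral_le_integral_abs.trans (integral_mono ((hZ i q).sub (hY i q)).abs
      (((hint i).const_mul _).const_mul _) fun x => ?_)
    exact abs_pow_sub_pow_le_of_abs_sub_le hi (hYZ i x) q
  simpa using hdiff.add (hm q)

end Moments

/-! ### Trigonometric polynomials -/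

section TrigPoly

open Pointwise

instance isProbabilityMeasure_unitAddCircle :
    IsProbabilityMeasure (volume : Measure UnitAddCircle) :=
  ⟨UnitAddCircle.measure_univ⟩

lemma integrable_of_continuous_unitAddCircle {E : Type*} [NormedAddCommGroup E]
    {F : UnitAddCircle → E} (hF : Continuous F) : Integrable F :=
  hF.integrable_of_hasCompactSupport (.of_compactSpace F)

lemma integral_fourier (m : ℤ) : ∫ x : UnitAddCircle, fourier m x = if m = 0 then 1 else 0 := by
  have h := congrFun (fourierCoeff_fourier (T := 1) m) 0
  simpa [fourierCoeff, AddCircle.integral_haarAddCircle, Pi.single_apply, eq_comm] using h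

lemma fourier_nsmul (m : ℤ) (k : ℕ) (x : UnitAddCircle) :
    fourier m (k • x) = fourier (k * m) x := by
  rw [fourier_apply, fourier_apply, mul_comm, mul_zsmul, natCast_zsmul]

/-- The complex trigonometric polynomials on the circle whose frequencies belong to `S`. -/
def trigSpan (S : Set ℤ) : Submodule ℂ (UnitAddCircle → ℂ) :=
  Submodule.span ℂ ((fun m => ⇑(fourier m)) '' S)

lemma fourier_mem_trigSpan {S : Set ℤ} {m : ℤ} (hm : m ∈ S) : ⇑(fourier m) ∈ trigSpan S :=
  Submodule.subset_span (Set.mem_image_of_mem _ hm)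

lemma trigSpan_mono {S T : Set ℤ} (h : S ⊆ T) : trigSpan S ≤ trigSpan T :=
  Submodule.span_mono (Set.image_mono h)

lemma trigSpan_add (S T : Set ℤ) : trigSpan (S + T) = trigSpan S * trigSpan T := by
  rw [trigSpan, trigSpan, trigSpan, Submodule.span_mul_span]
  congr 1
  refine Set.image_image2_distrib fun a b => ?_
  ext x
  exact fourier_add

lemma one_mem_trigSpan {S : Set ℤ} (h : 0 ∈ S) : 1 ∈ trigSpan S := by
  convert fourier_mem_trigSpan h
  ext x
  exact fourier_zero.symm

lemma comp_nsmul_mem_trigSpan {S : Set ℤ} {F : UnitAddCircle → ℂ} (hF : F ∈ trigSpan S) (k : ℕ) :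
    (fun x => F (k • x)) ∈ trigSpan ((fun m => k * m) '' S) := by
  induction hF using Submodule.span_induction with
  | mem F h =>
    obtain ⟨m, hm, rfl⟩ := h
    simp only [fourier_nsmul]
    exact fourier_mem_trigSpan (Set.mem_image_of_mem _ hm)
  | zero => exact zero_mem _
  | add F G _ _ hF hG => exact add_mem hF hG
  | smul a F _ hF => exact Submodule.smul_mem _ a hF

lemma continuous_of_mem_trigSpan {S : Set ℤ} {F : UnitAddCircle → ℂ} (hF : F ∈ trigSpan S) :
    Continuous F := by
  induction hF using Submodule.span_induction with
  | mem F h => obtain ⟨m, -, rfl⟩ := h; exact (fourier m).continuous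
  | zero => exact continuous_const
  | add F G _ _ hF hG => exact hF.add hG
  | smul a F _ hF => exact hF.const_smul a

lemma integral_mul_of_mem_trigSpan {S T : Set ℤ}
    (hST : ∀ a ∈ S, ∀ b ∈ T, a + b = 0 → a = 0 ∧ b = 0) {F G : UnitAddCircle → ℂ}
    (hF : F ∈ trigSpan S) (hG : G ∈ trigSpan T) :
    ∫ x, F x * G x = (∫ x, F x) * ∫ x, G x := by
  have hint {F G : UnitAddCircle → ℂ} (hF : F ∈ trigSpan S) (hG : G ∈ trigSpan T) :
      Integrable (fun x => F x * G x) :=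
    integrable_of_continuous_unitAddCircle
      ((continuous_of_mem_trigSpan hF).mul (continuous_of_mem_trigSpan hG))
  have hint' {S : Set ℤ} {F : UnitAddCircle → ℂ} (hF : F ∈ trigSpan S) : Integrable F :=
    integrable_of_continuous_unitAddCircle (continuous_of_mem_trigSpan hF)
  induction hF, hG using Submodule.span_induction₂ with
  | mem_mem F G h h' =>
    obtain ⟨a, ha, rfl⟩ := h
    obtain ⟨b, hb, rfl⟩ := h'
    simp only [← fourier_add, integral_fourier]
    have := hST a ha b hb
    split_ifs <;> grind
  | zero_left => simp
  | zero_right => simp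
  | add_left F F' G hF hF' hG h h' =>
    simp only [Pi.add_apply, add_mul]
    rw [integral_add (hint hF hG) (hint hF' hG), integral_add (hint' hF) (hint' hF'), h, h',
      add_mul]
  | add_right F G G' hF hG hG' h h' =>
    simp only [Pi.add_apply, mul_add]
    rw [integral_add (hint hF hG) (hint hF hG'), integral_add (hint' hG) (hint' hG'), h, h',
      mul_add]
  | smul_left a F G _ _ h =>
    simp only [Pi.smul_apply, smul_eq_mul, mul_assoc, integral_const_mul, h]
  | smul_right a F G _ _ h =>
    simp only [Pi.smul_apply, smul_eq_mul, mul_left_comm _ a, integral_const_mul, h]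

/-- `g` is a real trigonometric polynomial on the circle, of degree at most `D`. -/
def IsTrigPoly (D : ℕ) (g : UnitAddCircle → ℝ) : Prop :=
  (fun x => (g x : ℂ)) ∈ trigSpan (Set.Icc (-D) D)

lemma IsTrigPoly.continuous {D : ℕ} {g : UnitAddCircle → ℝ} (hg : IsTrigPoly D g) :
    Continuous g :=
  Complex.continuous_re.comp (continuous_of_mem_trigSpan hg)

end TrigPoly

lemma measurePreserving_nsmul {k : ℕ} (hk : 0 < k) :
    MeasurePreserving fun x : UnitAddCircle => k • x := by
  obtain rfl | hk' : k = 1 ∨ 1 < k := by omega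
  · simp only [one_smul]
    exact MeasurePreserving.id volume
  · exact (AddCircle.ergodic_nsmul hk').toMeasurePreserving

lemma integral_comp_nsmul {E : Type*} [NormedAddCommGroup E] [NormedSpace ℝ E] {k : ℕ} (hk : 0 < k)
    {F : UnitAddCircle → E} (hF : AEStronglyMeasurable F) : ∫ x, F (k • x) = ∫ x, F x := by
  have hmp := measurePreserving_nsmul hk
  rw [← integral_map hmp.aemeasurable (hmp.map_eq.symm ▸ hF), hmp.map_eq]

/-! ### Dilations along a sequence without short relations -/

section Relations

variable {ι : Type*} {n : ι → ℕ} {A A' : Finset ι} {r r' B B' D q : ℕ}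

/-- The integer `∑ k, ν k * n k` attached to a finitely supported coefficient vector `ν`. -/
def dot (n : ι → ℕ) : (ι →₀ ℤ) →ₗ[ℤ] ℤ := Finsupp.linearCombination ℤ fun k => (n k : ℤ)

/-- Coefficient vectors supported in `A`, with at most `r` nonzero entries, each at most `B` in
absolute value. -/
def coeffVecs (A : Finset ι) (r B : ℕ) : Set (ι →₀ ℤ) :=
  {ν | ν.support ⊆ A ∧ ν.support.card ≤ r ∧ ∀ k, |ν k| ≤ B}

/-- The integers `∑ k, ν k * n k` for `ν ∈ coeffVecs A r B`. -/
def shortCombs (n : ι → ℕ) (A : Finset ι) (r B : ℕ) : Set ℤ := dot n '' coeffVecs A r B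

/-- The elements `n k`, `k ∈ A`, satisfy no nontrivial linear relation with at most `r` terms and
coefficients bounded by `B`. -/
def NoRelation (n : ι → ℕ) (A : Finset ι) (r B : ℕ) : Prop :=
  ∀ ν ∈ coeffVecs A r B, dot n ν = 0 → ν = 0

lemma coeffVecs_mono (hA : A ⊆ A') (hr : r ≤ r') (hB : B ≤ B') :
    coeffVecs A r B ⊆ coeffVecs A' r' B' := fun _ h =>
  ⟨h.1.trans hA, h.2.1.trans hr, fun k => (h.2.2 k).trans (by exact_mod_cast hB)⟩

lemma NoRelation.mono (h : NoRelation n A' r' B') (hA : A ⊆ A') (hr : r ≤ r') (hB : B ≤ B') :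
    NoRelation n A r B :=
  fun ν hν => h ν (coeffVecs_mono hA hr hB hν)

lemma shortCombs_mono (hA : A ⊆ A') : shortCombs n A r B ⊆ shortCombs n A' r B :=
  Set.image_mono (coeffVecs_mono hA le_rfl le_rfl)

lemma zero_mem_shortCombs : 0 ∈ shortCombs n A r B :=
  ⟨0, by simp [coeffVecs], map_zero _⟩

lemma mul_mem_shortCombs {a : ι} {m : ℤ} (hm : |m| ≤ B) : n a * m ∈ shortCombs n {a} 1 B := by
  refine ⟨.single a m, ⟨Finsupp.support_single_subset, ?_, fun k => ?_⟩, ?_⟩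
  · exact (Finset.card_le_card Finsupp.support_single_subset).trans_eq (Finset.card_singleton a)
  · classical
    rw [Finsupp.single_apply]
    split_ifs
    · exact hm
    · simp
  · simp [dot, mul_comm]

lemma add_mem_coeffVecs [DecidableEq ι] {ν ν' : ι →₀ ℤ} (h : ν ∈ coeffVecs A r B)
    (h' : ν' ∈ coeffVecs A' r' B') :
    ν + ν' ∈ coeffVecs (A ∪ A') (r + r') (B + B') := by
  refine ⟨Finsupp.support_add.trans (Finset.union_subset_union h.1 h'.1), ?_, fun k => ?_⟩
  · exact ((Finset.card_le_card Finsupp.support_add).trans (Finset.card_union_le _ _)).trans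
      (add_le_add h.2.1 h'.2.1)
  · rw [Finsupp.add_apply, Nat.cast_add]
    exact (abs_add_le _ _).trans (add_le_add (h.2.2 k) (h'.2.2 k))

open Pointwise in
lemma shortCombs_add_subset [DecidableEq ι] :
    shortCombs n A r B + shortCombs n A' r' B' ⊆ shortCombs n (A ∪ A') (r + r') (B + B') := by
  rintro _ ⟨_, ⟨ν, hν, rfl⟩, _, ⟨ν', hν', rfl⟩, rfl⟩
  exact ⟨ν + ν', add_mem_coeffVecs hν hν', map_add _ _ _⟩

lemma NoRelation.eq_zero_of_add_eq_zero [DecidableEq ι]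
    (h : NoRelation n (A ∪ A') (r + r') (B + B'))
    (hd : Disjoint A A') :
    ∀ a ∈ shortCombs n A r B, ∀ b ∈ shortCombs n A' r' B', a + b = 0 → a = 0 ∧ b = 0 := by
  rintro _ ⟨ν, hν, rfl⟩ _ ⟨ν', hν', rfl⟩ hsum
  have hzero : ν + ν' = 0 := h _ (add_mem_coeffVecs hν hν') (by rw [map_add, hsum])
  have hsupp := Finsupp.support_add_eq (Finset.disjoint_of_subset_left hν.1
    (Finset.disjoint_of_subset_right hν'.1 hd))
  rw [hzero, Finsupp.support_zero, eq_comm, Finset.union_eq_empty, Finsupp.support_eq_empty,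
    Finsupp.support_eq_empty] at hsupp
  simp [hsupp.1, hsupp.2]

lemma pow_mem_trigSpan_shortCombs {F : UnitAddCircle → ℂ}
    (hF : F ∈ trigSpan (shortCombs n A 1 B)) (i : ℕ) :
    F ^ i ∈ trigSpan (shortCombs n A i (i * B)) := by
  classical
  induction i with
  | zero => exact one_mem_trigSpan zero_mem_shortCombs
  | succ i ih =>
    have hsub := shortCombs_add_subset (n := n) (A := A) (A' := A) (r := i) (r' := 1)
      (B := i * B) (B' := B)
    rw [Finset.union_self, ← Nat.succ_mul] at hsub
    have hmul := Submodule.mul_mem_mul ih hF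
    rw [← trigSpan_add, ← pow_succ] at hmul
    exact trigSpan_mono hsub hmul

variable {g : UnitAddCircle → ℝ}

lemma IsTrigPoly.comp_nsmul_mem_trigSpan (hg : IsTrigPoly D g) (a : ι) :
    (fun x => (g (n a • x) : ℂ)) ∈ trigSpan (shortCombs n {a} 1 D) := by
  refine trigSpan_mono ?_ (_root_.comp_nsmul_mem_trigSpan hg (n a))
  rintro _ ⟨m, hm, rfl⟩
  exact mul_mem_shortCombs (abs_le.2 hm)

lemma IsTrigPoly.sum_comp_nsmul_mem_trigSpan (hg : IsTrigPoly D g) (n : ι → ℕ) (A : Finset ι) :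
    (fun x => ((∑ k ∈ A, g (n k • x) : ℝ) : ℂ)) ∈ trigSpan (shortCombs n A 1 D) := by
  have h := Submodule.sum_mem (trigSpan (shortCombs n A 1 D)) fun k hk => trigSpan_mono
    (shortCombs_mono (Finset.singleton_subset_iff.2 hk)) (hg.comp_nsmul_mem_trigSpan (n := n) k)
  convert h using 1
  ext x
  simp

lemma IsTrigPoly.integral_pow_mul_pow [DecidableEq ι] (hg : IsTrigPoly D g) {a : ι} (ha : a ∉ A)
    {i j : ℕ} (h : NoRelation n (insert a A) (i + j) (i * D + j * D)) :
    ∫ x, g (n a • x) ^ i * (∑ k ∈ A, g (n k • x)) ^ j =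
      (∫ x, g (n a • x) ^ i) * ∫ x, (∑ k ∈ A, g (n k • x)) ^ j := by
  have hC := integral_mul_of_mem_trigSpan
    (NoRelation.eq_zero_of_add_eq_zero h (Finset.disjoint_singleton_left.2 ha))
    (pow_mem_trigSpan_shortCombs (hg.comp_nsmul_mem_trigSpan a) i)
    (pow_mem_trigSpan_shortCombs (hg.sum_comp_nsmul_mem_trigSpan n A) j)
  simp only [Pi.pow_apply, ← Complex.ofReal_pow, ← Complex.ofReal_mul, integral_complex_ofReal]
    at hC
  exact_mod_cast hC

lemma IsTrigPoly.coeff_momentSeries_sum (hn : ∀ k, 0 < n k) (hg : IsTrigPoly D g)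
    (h : NoRelation n A q (q * D)) {i : ℕ} (hi : i ≤ q) :
    PowerSeries.coeff i (momentSeries volume fun x => ∑ k ∈ A, g (n k • x)) =
      PowerSeries.coeff i (momentSeries volume g ^ A.card) := by
  classical
  induction A using Finset.induction_on generalizing i with
  | empty => simp [momentSeries_zero]
  | insert a A ha ih =>
    have hgc := hg.continuous
    have hdil : momentSeries volume (fun x => g (n a • x)) = momentSeries volume g := by
      ext j
      rw [coeff_momentSeries, coeff_momentSeries,
        integral_comp_nsmul (hn a) (F := fun x => g x ^ j) (hgc.pow j).aestronglyMeasurable]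
    have hadd := coeff_momentSeries_add (q := i) (μ := volume) (U := fun x => g (n a • x))
      (V := fun x => ∑ k ∈ A, g (n k • x))
      (fun _ _ _ => integrable_of_continuous_unitAddCircle (by fun_prop))
      (fun j k hjk => hg.integral_pow_mul_pow ha
        (h.mono subset_rfl (by omega) (by rw [← add_mul]; gcongr; omega)))
    simp only [Finset.sum_insert ha]
    rw [hadd, hdil, Finset.card_insert_of_notMem ha, pow_succ', PowerSeries.coeff_mul,
      PowerSeries.coeff_mul]
    refine Finset.sum_congr rfl fun jk hjk => ?_
    have := Finset.HasAntidiagonal.mem_antidiagonal.1 hjk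
    rw [ih (h.mono (Finset.subset_insert a A) le_rfl le_rfl) (by omega)]

end Relations

/-! ### Smoothing by the Fejér kernel -/

section Smooth

variable {G : Type*} [AddGroup G] [MeasurableSpace G] {μ : Measure G} {K F : G → ℝ} {C : ℝ}

/-- The average of the translates `x ↦ F (x + t)` with weights `K t`. -/
def smooth (μ : Measure G) (K F : G → ℝ) (x : G) : ℝ := ∫ t, K t * F (x + t) ∂μ

lemma abs_smooth_le (hK : ∀ t, 0 ≤ K t) (hK1 : ∫ t, K t ∂μ = 1) (hC : ∀ x, |F x| ≤ C) (x : G) :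
    |smooth μ K F x| ≤ C := by
  have hbound : ∀ t, ‖K t * F (x + t)‖ ≤ K t * C := fun t => by
    rw [norm_mul, Real.norm_of_nonneg (hK t)]
    exact mul_le_mul_of_nonneg_left (hC _) (hK t)
  refine (norm_integral_le_of_norm_le ((integrable_of_integral_eq_one hK1).mul_const C)
    (.of_forall hbound)).trans_eq ?_
  rw [integral_mul_const, hK1, one_mul]

variable [MeasurableAdd₂ G] [IsProbabilityMeasure μ]

lemma integrable_mul_comp_add (hK : Integrable K μ) (hF : Measurable F) (hC : ∀ x, |F x| ≤ C) :
    Integrable (fun z : G × G => K z.2 * F (z.1 + z.2)) (μ.prod μ) :=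
  (hK.comp_snd μ).mul_bdd (c := C) (hF.comp measurable_add).aestronglyMeasurable
    (.of_forall fun _ => hC _)

lemma integral_smooth [μ.IsAddRightInvariant] (hK : Integrable K μ) (hF : Measurable F)
    (hC : ∀ x, |F x| ≤ C) :
    ∫ x, smooth μ K F x ∂μ = (∫ t, K t ∂μ) * ∫ x, F x ∂μ := by
  simp only [smooth]
  rw [integral_integral_swap (integrable_mul_comp_add hK hF hC)]
  simp only [integral_const_mul, integral_add_right_eq_self F, integral_mul_const]

lemma integral_abs_smooth_sub_le (hK : ∀ t, 0 ≤ K t) (hK1 : ∫ t, K t ∂μ = 1)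
    (hF : Measurable F) (hC : ∀ x, |F x| ≤ C) :
    ∫ x, |smooth μ K F x - F x| ∂μ ≤ ∫ t, K t * ∫ x, |F (x + t) - F x| ∂μ ∂μ := by
  have hKi : Integrable K μ := integrable_of_integral_eq_one hK1
  have hconst : Integrable (fun z : G × G => K z.2 * F z.1) (μ.prod μ) :=
    (hKi.comp_snd μ).mul_bdd (c := C) (hF.comp measurable_fst).aestronglyMeasurable
      (.of_forall fun _ => hC _)
  have hprod := (integrable_mul_comp_add hKi hF hC).sub hconst
  have hdiff : ∀ x, smooth μ K F x - F x = ∫ t, (K t * F (x + t) - K t * F x) ∂μ := fun x => by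
    have hshift : Integrable (fun t => K t * F (x + t)) μ :=
      hKi.mul_bdd (c := C) (hF.comp (measurable_const_add x)).aestronglyMeasurable
        (.of_forall fun _ => hC _)
    rw [integral_sub hshift (hKi.mul_const (F x)), integral_mul_const, hK1, one_mul, smooth]
  calc ∫ x, |smooth μ K F x - F x| ∂μ
      ≤ ∫ x, ∫ t, |K t * F (x + t) - K t * F x| ∂μ ∂μ := by
        simp only [hdiff]
        exact integral_mono hprod.integral_prod_left.abs hprod.abs.integral_prod_left
          fun x => abs_integral_le_integral_abs
    _ = ∫ t, ∫ x, |K t * F (x + t) - K t * F x| ∂μ ∂μ := integral_integral_swap hprod.abs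
    _ = ∫ t, K t * ∫ x, |F (x + t) - F x| ∂μ ∂μ := by
        simp only [← mul_sub, abs_mul, abs_of_nonneg (hK _), integral_const_mul]

end Smooth

section Fejer

open Pointwise

lemma fourier_apply_add (m : ℤ) (x y : UnitAddCircle) :
    (fourier m (x + y) : ℂ) = fourier m x * fourier m y := by
  simp only [fourier_apply, smul_add, AddCircle.toCircle_add, Circle.coe_mul]

lemma fourier_apply_neg (m : ℤ) (x : UnitAddCircle) : (fourier m (-x) : ℂ) = fourier (-m) x := by
  rw [fourier_apply, fourier_apply, smul_neg, neg_smul]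

lemma integral_mul_comp_add_mem_trigSpan {S : Set ℤ} {H : UnitAddCircle → ℂ} (hH : H ∈ trigSpan S)
    {F : UnitAddCircle → ℂ} (hF : Measurable F) {C : ℝ} (hC : ∀ x, ‖F x‖ ≤ C) :
    (fun x => ∫ t, H t * F (x + t)) ∈ trigSpan (-S) := by
  induction hH using Submodule.span_induction with
  | mem H h =>
    obtain ⟨m, hm, rfl⟩ := h
    have hconv : (fun x => ∫ t, fourier m t * F (x + t)) =
        (∫ u, fourier m u * F u) • ⇑(fourier (-m)) := by
      ext x
      rw [← integral_add_left_eq_self _ (-x)]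
      simp only [add_neg_cancel_left, fourier_apply_add, fourier_apply_neg, mul_assoc,
        integral_const_mul]
      exact mul_comm _ _
    rw [hconv]
    exact Submodule.smul_mem _ _ (fourier_mem_trigSpan (by simpa using hm))
  | zero =>
    simp only [Pi.zero_apply, zero_mul, integral_zero]
    exact zero_mem _
  | add H H' hH hH' h h' =>
    have hint {H : UnitAddCircle → ℂ} (hH : H ∈ trigSpan S) (x : UnitAddCircle) :
        Integrable (fun t => H t * F (x + t)) :=
      (integrable_of_continuous_unitAddCircle (continuous_of_mem_trigSpan hH)).mul_bdd (c := C)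
        (hF.comp (measurable_const_add x)).aestronglyMeasurable (.of_forall fun _ => hC _)
    convert add_mem h h' using 1
    ext x
    simp only [Pi.add_apply, add_mul]
    exact integral_add (hint hH x) (hint hH' x)
  | smul a H _ h =>
    convert Submodule.smul_mem _ a h using 1
    ext x
    simp only [Pi.smul_apply, smul_eq_mul, mul_assoc, integral_const_mul]

lemma isTrigPoly_smooth {D : ℕ} {K : UnitAddCircle → ℝ} (hK : IsTrigPoly D K)
    {F : UnitAddCircle → ℝ} (hF : Measurable F) {C : ℝ} (hC : ∀ x, |F x| ≤ C) :
    IsTrigPoly D (smooth volume K F) := by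
  have h := integral_mul_comp_add_mem_trigSpan hK (F := fun x => (F x : ℂ)) (by fun_prop)
    (fun x => (Complex.norm_real _).trans_le (hC x))
  rw [Set.neg_Icc, neg_neg] at h
  simpa only [IsTrigPoly, smooth, ← integral_complex_ofReal, Complex.ofReal_mul] using h

/-- The Fejér kernel of degree `D` on the circle. -/
def fejer (D : ℕ) (t : UnitAddCircle) : ℝ :=
  ‖∑ j ∈ Finset.range (D + 1), (fourier j t : ℂ)‖ ^ 2 / (D + 1)

lemma fejer_nonneg (D : ℕ) (t : UnitAddCircle) : 0 ≤ fejer D t := by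
  unfold fejer
  positivity

lemma ofReal_fejer (D : ℕ) (t : UnitAddCircle) : (fejer D t : ℂ) =
    (D + 1 : ℂ)⁻¹ * ∑ j ∈ Finset.range (D + 1), ∑ k ∈ Finset.range (D + 1),
      fourier ((j : ℤ) - k) t := by
  rw [fejer, Complex.ofReal_div, Complex.ofReal_pow, ← Complex.mul_conj', map_sum,
    Finset.sum_mul_sum, div_eq_inv_mul]
  simp only [sub_eq_add_neg, fourier_add, fourier_neg]
  push_cast
  rfl

lemma isTrigPoly_fejer (D : ℕ) : IsTrigPoly D (fejer D) := by
  have hsum : (fun t => (fejer D t : ℂ)) = (D + 1 : ℂ)⁻¹ •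
      ∑ j ∈ Finset.range (D + 1), ∑ k ∈ Finset.range (D + 1), ⇑(fourier ((j : ℤ) - k)) := by
    ext t
    simp [ofReal_fejer, Finset.sum_apply]
  rw [IsTrigPoly, hsum]
  refine Submodule.smul_mem _ _ (Submodule.sum_mem _ fun j hj => Submodule.sum_mem _ fun k hk =>
    fourier_mem_trigSpan ?_)
  simp only [Finset.mem_range] at hj hk
  exact ⟨by omega, by omega⟩

lemma integral_fejer (D : ℕ) : ∫ t, fejer D t = 1 := by
  have hint : ∀ m : ℤ, Integrable (fun t : UnitAddCircle => fourier m t) := fun m =>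
    integrable_of_continuous_unitAddCircle (fourier m).continuous
  have hC : ∫ t, (fejer D t : ℂ) = 1 := by
    simp only [ofReal_fejer, integral_const_mul]
    rw [integral_finsetSum _ fun j _ => integrable_finsetSum _ fun k _ => hint _]
    simp only [integral_finsetSum _ fun _ _ => hint _, integral_fourier, sub_eq_zero, Nat.cast_inj,
      Finset.sum_ite_eq, Finset.sum_ite_mem, Finset.inter_self, Finset.sum_const,
      Finset.card_range, nsmul_one]
    push_cast
    exact inv_mul_cancel₀ (Nat.cast_add_one_ne_zero D)
  rw [integral_complex_ofReal] at hC
  exact_mod_cast hC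

lemma exists_coe_eq_and_norm_eq_abs (t : UnitAddCircle) :
    ∃ y : ℝ, (y : UnitAddCircle) = t ∧ ‖t‖ = |y| ∧ |y| ≤ 1 / 2 := by
  obtain ⟨x, rfl⟩ := QuotientAddGroup.mk_surjective t
  refine ⟨x - round x, ?_, UnitAddCircle.norm_eq, abs_sub_round x⟩
  have hround : ((round x : ℝ) : UnitAddCircle) = 0 :=
    (AddCircle.coe_eq_zero_iff 1).2 ⟨round x, by simp⟩
  rw [AddCircle.coe_sub, hround, sub_zero]

lemma norm_le_norm_fourier_one_sub_one (t : UnitAddCircle) : ‖t‖ ≤ ‖(fourier 1 t : ℂ) - 1‖ := by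
  obtain ⟨y, rfl, hnorm, hy⟩ := exists_coe_eq_and_norm_eq_abs t
  have hsin : 2 / π * |π * y| ≤ |Real.sin (π * y)| := by
    refine Real.mul_abs_le_abs_sin ?_
    rw [abs_mul, abs_of_pos Real.pi_pos]
    nlinarith [Real.pi_pos]
  have hexp : ‖(fourier 1 (y : UnitAddCircle) : ℂ) - 1‖ = 2 * |Real.sin (π * y)| := by
    have h := Complex.norm_exp_I_mul_ofReal_sub_one (2 * π * y)
    rw [norm_mul, Real.norm_ofNat, Real.norm_eq_abs, mul_assoc, mul_div_cancel_left₀ _ two_ne_zero]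
      at h
    rw [← h, fourier_coe_apply]
    push_cast
    ring_nf
  rw [hnorm, hexp]
  rw [abs_mul, abs_of_pos Real.pi_pos, ← mul_assoc, div_mul_cancel₀ _ Real.pi_ne_zero] at hsin
  linarith [abs_nonneg y]

lemma fejer_mul_norm_sq_le (D : ℕ) (t : UnitAddCircle) : fejer D t * ‖t‖ ^ 2 ≤ 4 / (D + 1) := by
  have hgeom : (∑ j ∈ Finset.range (D + 1), (fourier j t : ℂ)) * (fourier 1 t - 1) =
      fourier (D + 1 : ℕ) t - 1 := by
    simpa only [fourier_apply, natCast_zsmul, one_zsmul, AddCircle.toCircle_nsmul, Circle.coe_pow]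
      using geom_sum_mul _ _
  have hnum : ‖∑ j ∈ Finset.range (D + 1), (fourier j t : ℂ)‖ * ‖t‖ ≤ 2 := by
    calc _ ≤ ‖∑ j ∈ Finset.range (D + 1), (fourier j t : ℂ)‖ * ‖(fourier 1 t : ℂ) - 1‖ := by
          gcongr
          exact norm_le_norm_fourier_one_sub_one t
      _ = ‖(fourier (D + 1 : ℕ) t : ℂ) - 1‖ := by rw [← norm_mul, hgeom]
      _ ≤ 2 := by
        refine (norm_sub_le _ _).trans_eq ?_
        rw [fourier_apply, Circle.norm_coe, norm_one, one_add_one_eq_two]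
  rw [fejer, div_mul_eq_mul_div, ← mul_pow]
  gcongr
  calc _ ≤ (2 : ℝ) ^ 2 := by gcongr
    _ = 4 := by norm_num

lemma integral_fejer_mul_norm_rpow_le (D : ℕ) {α η : ℝ} (hα : 0 < α) (hη : 0 < η) :
    ∫ t, fejer D t * ‖t‖ ^ α ≤ η ^ α + 4 / (η ^ 2 * (D + 1)) := by
  have hrpow (t : UnitAddCircle) : ‖t‖ ^ α ≤ η ^ α + ‖t‖ ^ 2 / η ^ 2 := by
    rcases le_total ‖t‖ η with h | h
    · have := rpow_le_rpow (norm_nonneg t) h hα.le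
      have : 0 ≤ ‖t‖ ^ 2 / η ^ 2 := by positivity
      linarith
    · have hle : ‖t‖ ≤ 1 := by
        obtain ⟨y, -, hnorm, hy⟩ := exists_coe_eq_and_norm_eq_abs t
        linarith
      have := rpow_le_one (norm_nonneg t) hle hα.le
      have : 1 ≤ ‖t‖ ^ 2 / η ^ 2 := by
        rw [one_le_div (by positivity)]
        gcongr
      have := rpow_nonneg hη.le α
      linarith
  have hpoint (t : UnitAddCircle) :
      fejer D t * ‖t‖ ^ α ≤ fejer D t * η ^ α + 4 / (η ^ 2 * (D + 1)) := by
    have := mul_le_mul_of_nonneg_left (hrpow t) (fejer_nonneg D t)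
    have := div_le_div_of_nonneg_right (fejer_mul_norm_sq_le D t) (sq_nonneg η)
    rw [div_div, mul_comm _ (η ^ 2), ← mul_div_assoc'] at this
    linarith
  have hcont := (isTrigPoly_fejer D).continuous
  have hint := integrable_of_continuous_unitAddCircle hcont
  have hleft : Integrable fun t : UnitAddCircle => fejer D t * ‖t‖ ^ α :=
    integrable_of_continuous_unitAddCircle
      (hcont.mul (continuous_norm.rpow_const fun _ => .inr hα.le))
  refine (integral_mono hleft ((hint.mul_const _).add (integrable_const _)) hpoint).trans_eq ?_
  rw [integral_add' (hint.mul_const _) (integrable_const _), integral_mul_const, integral_fejer]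
  simp

lemma integral_abs_smooth_fejer_sub_le {F : UnitAddCircle → ℝ} {C V α η : ℝ} (hF : Measurable F)
    (hC : ∀ x, |F x| ≤ C) (hα : 0 < α) (hmod : ∀ t, ∫ x, |F (x + t) - F x| ≤ V * ‖t‖ ^ α)
    (hη : 0 < η) (D : ℕ) :
    ∫ x, |smooth volume (fejer D) F x - F x| ≤ |V| * (η ^ α + 4 / (η ^ 2 * (D + 1))) := by
  have hcont : Continuous fun t : UnitAddCircle => fejer D t * ‖t‖ ^ α :=
    (isTrigPoly_fejer D).continuous.mul (continuous_norm.rpow_const fun _ => .inr hα.le)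
  have hmod' (t : UnitAddCircle) :
      fejer D t * ∫ x, |F (x + t) - F x| ≤ |V| * (fejer D t * ‖t‖ ^ α) := by
    rw [mul_left_comm]
    refine mul_le_mul_of_nonneg_left ((hmod t).trans ?_) (fejer_nonneg D t)
    gcongr
    exact le_abs_self V
  calc ∫ x, |smooth volume (fejer D) F x - F x|
      ≤ ∫ t, fejer D t * ∫ x, |F (x + t) - F x| :=
        integral_abs_smooth_sub_le (fejer_nonneg D) (integral_fejer D) hF hC
    _ ≤ ∫ t, |V| * (fejer D t * ‖t‖ ^ α) :=
        integral_mono_of_nonneg (.of_forall fun t =>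
            mul_nonneg (fejer_nonneg D t) (integral_nonneg fun x => abs_nonneg _))
          ((integrable_of_continuous_unitAddCircle hcont).const_mul _) (.of_forall hmod')
    _ ≤ |V| * (η ^ α + 4 / (η ^ 2 * (D + 1))) := by
        rw [integral_const_mul]
        gcongr
        exact integral_fejer_mul_norm_rpow_le D hα hη

lemma exists_isTrigPoly_integral_abs_sub_le {F : UnitAddCircle → ℝ} {C V α : ℝ}
    (hF : Measurable F) (hC : ∀ x, |F x| ≤ C) (hF0 : ∫ x, F x = 0) (hα : 0 < α)
    (hmod : ∀ t, ∫ x, |F (x + t) - F x| ≤ V * ‖t‖ ^ α) (q : ℕ) :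
    ∃ (L : ℕ) (W : ℝ), ∀ N : ℕ, ∃ g, IsTrigPoly (N ^ L) g ∧ (∀ x, |g x| ≤ C) ∧ ∫ x, g x = 0 ∧
      (0 < N → ∫ x, |g x - F x| ≤ W / N ^ q) := by
  obtain ⟨a, ha⟩ := exists_nat_ge (q / α)
  rw [div_le_iff₀ hα] at ha
  refine ⟨2 * a + q, |V| * 5, fun N => ⟨smooth volume (fejer (N ^ (2 * a + q))) F,
    isTrigPoly_smooth (isTrigPoly_fejer _) hF hC,
    abs_smooth_le (fejer_nonneg _) (integral_fejer _) hC, ?_, fun hN => ?_⟩⟩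
  · rw [integral_smooth (integrable_of_integral_eq_one (integral_fejer _)) hF hC, hF0, mul_zero]
  · have hN0 : (0 : ℝ) < N := by exact_mod_cast hN
    have hη : (((N : ℝ) ^ a)⁻¹) ^ α ≤ 1 / N ^ q := by
      rw [inv_rpow (by positivity), ← rpow_natCast, ← rpow_mul hN0.le, ← rpow_natCast, one_div]
      gcongr
      exact_mod_cast hN
    have hD : 4 / ((((N : ℝ) ^ a)⁻¹) ^ 2 * ((N ^ (2 * a + q) : ℕ) + 1)) ≤ 4 / N ^ q := by
      gcongr
      rw [inv_pow, inv_mul_eq_div, le_div_iff₀ (by positivity)]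
      calc (N : ℝ) ^ q * ((N : ℝ) ^ a) ^ 2 = (N : ℝ) ^ (2 * a + q) := by ring
        _ ≤ ((N ^ (2 * a + q) : ℕ) : ℝ) + 1 := by push_cast; linarith
    refine (integral_abs_smooth_fejer_sub_le hF hC hα hmod (η := ((N : ℝ) ^ a)⁻¹)
      (by positivity) _).trans ?_
    rw [mul_div_assoc]
    gcongr
    exact (add_le_add hη hD).trans_eq (by ring)

end Fejer

/-! ### Discarding the small elements of the sequence -/

section Discarding

variable {n : ℕ → ℕ}

open scoped Classical in
/-- The indices below `N` whose element is among the `M` smallest ones. -/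
def smallIndices (n : ℕ → ℕ) (M N : ℕ) : Finset ℕ :=
  {k ∈ Finset.range N | AmongSmallest n M k}

open scoped Classical in
/-- The indices below `N` whose element is not among the `M` smallest ones. -/
def largeIndices (n : ℕ → ℕ) (M N : ℕ) : Finset ℕ :=
  {k ∈ Finset.range N | ¬ AmongSmallest n M k}

lemma sum_smallIndices_add_sum_largeIndices {E : Type*} [AddCommMonoid E] (n : ℕ → ℕ) (M N : ℕ)
    (F : ℕ → E) :
    ∑ k ∈ smallIndices n M N, F k + ∑ k ∈ largeIndices n M N, F k = ∑ k ∈ Finset.range N, F k := by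
  classical
  exact Finset.sum_filter_add_sum_filter_not _ _ _

lemma card_smallIndices_add_card_largeIndices (n : ℕ → ℕ) (M N : ℕ) :
    (smallIndices n M N).card + (largeIndices n M N).card = N := by
  simpa using sum_smallIndices_add_sum_largeIndices n M N fun _ => (1 : ℕ)

lemma card_smallIndices_le (hn : Function.Injective n) (M N : ℕ) :
    (smallIndices n M N).card ≤ M := by
  classical
  rcases (smallIndices n M N).eq_empty_or_nonempty with h | h
  · simp [h]
  · obtain ⟨k, hk, hmax⟩ := (smallIndices n M N).exists_max_image n h
    have hfin : {j | n j ≤ n k}.Finite := (Set.finite_Iic (n k)).preimage hn.injOn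
    calc (smallIndices n M N).card = (smallIndices n M N : Set ℕ).ncard :=
          (Set.ncard_coe_finset _).symm
      _ ≤ {j | n j ≤ n k}.ncard := Set.ncard_le_ncard hmax hfin
      _ ≤ M := (Finset.mem_filter.1 hk).2

-- Condition `A_ω` says nothing about one-term relations; positivity of the `n k` excludes them.
lemma CondAWith.noRelation_largeIndices {ω : ℕ → ℝ} {N₀ : ℕ} (hA : CondAWith ω n N₀)
    (hn : ∀ k, 0 < n k) {M : ℕ} (hM : N₀ ≤ M) (N : ℕ) {r B : ℕ} (hr : (r : ℝ) ≤ ω M)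
    (hB : (B : ℝ) ≤ (M : ℝ) ^ ω M) : NoRelation n (largeIndices n M N) r B := by
  classical
  rintro ν ⟨hsupp, hcard, hbound⟩ hdot
  by_contra hν
  have hpos : 0 < ν.support.card := Finset.card_pos.2 (Finsupp.support_nonempty_iff.2 hν)
  rcases Nat.lt_or_ge ν.support.card 2 with hone | htwo
  · obtain ⟨a, b, hb, rfl⟩ := Finsupp.card_support_eq_one'.1 (show ν.support.card = 1 by omega)
    simp [dot, hb, (hn a).ne'] at hdot
  · let e := ν.support.equivFin.symm
    have hsum : ∑ i, ν (e i) * (n (e i) : ℤ) = 0 := by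
      rw [Equiv.sum_comp e (fun k : ν.support => ν k * (n k : ℤ)),
        Finset.sum_coe_sort ν.support (fun k => ν k * (n k : ℤ))]
      simpa only [dot, Finsupp.linearCombination_apply, Finsupp.sum, smul_eq_mul] using hdot
    have hsmall := hA M hM ν.support.card (fun i => e i) (fun i => ν (e i)) htwo
      (le_trans (by exact_mod_cast hcard) hr) (Subtype.val_injective.comp e.injective)
      (fun i => Finsupp.mem_support_iff.1 (e i).2)
      (fun i => le_trans (by exact_mod_cast hbound (e i)) hB) hsum ⟨0, hpos⟩
    exact (Finset.mem_filter.1 (hsupp (e ⟨0, hpos⟩).2)).2 hsmall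

/-- The cutoff `⌊N^(1/4)⌋`: negligible against `√N`, yet of polynomial size. -/
def cut (N : ℕ) : ℕ := Nat.sqrt (Nat.sqrt N)

lemma cut_pow_le (N : ℕ) : cut N ^ 4 ≤ N :=
  calc cut N ^ 4 = (cut N ^ 2) ^ 2 := by ring
    _ ≤ Nat.sqrt N ^ 2 := Nat.pow_le_pow_left (Nat.sqrt_le' _) 2
    _ ≤ N := Nat.sqrt_le' N

lemma lt_cut_add_one_pow (N : ℕ) : N < (cut N + 1) ^ 4 :=
  calc N < (Nat.sqrt N + 1) ^ 2 := Nat.lt_succ_sqrt' N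
    _ ≤ ((cut N + 1) ^ 2) ^ 2 := Nat.pow_le_pow_left (Nat.lt_succ_sqrt' (Nat.sqrt N)) 2
    _ = (cut N + 1) ^ 4 := by ring

lemma tendsto_cut : Tendsto cut atTop atTop := by
  refine tendsto_atTop.2 fun b => ?_
  filter_upwards [eventually_ge_atTop (b ^ 4)] with N hN
  have := lt_of_pow_lt_pow_left₀ 4 (Nat.zero_le _) (hN.trans_lt (lt_cut_add_one_pow N))
  omega

lemma tendsto_cut_div_sqrt : Tendsto (fun N : ℕ => cut N / √N) atTop (𝓝 0) := by
  have hinv : Tendsto (fun N : ℕ => (cut N : ℝ)⁻¹) atTop (𝓝 0) :=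
    tendsto_inv_atTop_zero.comp (tendsto_natCast_atTop_atTop.comp tendsto_cut)
  refine squeeze_zero' (.of_forall fun N => by positivity) ?_ hinv
  filter_upwards [eventually_gt_atTop 0, tendsto_cut.eventually_gt_atTop 0] with N hN hcut
  rw [div_le_iff₀ (by positivity), inv_mul_eq_div, le_div_iff₀ (by positivity)]
  refine Real.le_sqrt_of_sq_le ?_
  have hcut4 : ((cut N : ℝ)) ^ 4 ≤ N := by exact_mod_cast cut_pow_le N
  exact hcut4.trans_eq' (by ring)

lemma tendsto_card_largeIndices_div (hn : Function.Injective n) :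
    Tendsto (fun N : ℕ => ((largeIndices n (cut N) N).card : ℝ) / N) atTop (𝓝 1) := by
  have hsmall : Tendsto (fun N : ℕ => ((smallIndices n (cut N) N).card : ℝ) / N) atTop (𝓝 0) := by
    refine squeeze_zero' (.of_forall fun N => by positivity) ?_ tendsto_cut_div_sqrt
    filter_upwards [eventually_gt_atTop 0] with N hN
    gcongr
    · exact card_smallIndices_le hn _ N
    · exact Real.sqrt_le_iff.2 ⟨by positivity, by exact_mod_cast Nat.le_self_pow two_ne_zero N⟩
  have hone := hsmall.const_sub 1
  rw [sub_zero] at hone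
  refine hone.congr' ?_
  filter_upwards [eventually_gt_atTop 0] with N hN
  have hcard : ((smallIndices n (cut N) N).card : ℝ) + (largeIndices n (cut N) N).card = N := by
    exact_mod_cast card_smallIndices_add_card_largeIndices n (cut N) N
  have hN' : (N : ℝ) ≠ 0 := by positivity
  rw [one_sub_div hN', ← hcard, add_sub_cancel_left]

lemma eventually_mul_pow_le_cut_rpow {ω : ℕ → ℝ} (hω : Tendsto ω atTop atTop) (Q L : ℕ) :
    ∀ᶠ N : ℕ in atTop, ((Q * N ^ L : ℕ) : ℝ) ≤ (cut N : ℝ) ^ ω (cut N) := by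
  filter_upwards [tendsto_cut.eventually_ge_atTop 2, tendsto_cut.eventually_ge_atTop Q,
    (hω.comp tendsto_cut).eventually_ge_atTop ((8 * L + 1 : ℕ) : ℝ)] with N htwo hQ hω
  have hN : N ≤ cut N ^ 8 :=
    calc N ≤ (cut N + 1) ^ 4 := (lt_cut_add_one_pow N).le
      _ ≤ (cut N ^ 2) ^ 4 := Nat.pow_le_pow_left (by nlinarith) 4
      _ = cut N ^ 8 := by ring
  have hpow : Q * N ^ L ≤ cut N ^ (8 * L + 1) :=
    calc Q * N ^ L ≤ cut N * (cut N ^ 8) ^ L := by gcongr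
      _ = cut N ^ (8 * L + 1) := by ring
  calc ((Q * N ^ L : ℕ) : ℝ) ≤ (cut N : ℝ) ^ (8 * L + 1) := by exact_mod_cast hpow
    _ = (cut N : ℝ) ^ ((8 * L + 1 : ℕ) : ℝ) := (rpow_natCast _ _).symm
    _ ≤ (cut N : ℝ) ^ ω (cut N) :=
      rpow_le_rpow_of_exponent_le (by exact_mod_cast one_le_two.trans htwo) hω

lemma CondA.eventually_noRelation_largeIndices {ω : ℕ → ℝ} (hA : CondA ω n)
    (hω : Tendsto ω atTop atTop) (hn : ∀ k, 0 < n k) (q L : ℕ) :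
    ∀ᶠ N : ℕ in atTop, NoRelation n (largeIndices n (cut N) N) q (q * N ^ L) := by
  obtain ⟨N₀, hA⟩ := hA
  filter_upwards [tendsto_cut.eventually_ge_atTop N₀,
    (hω.comp tendsto_cut).eventually_ge_atTop (q : ℝ),
    eventually_mul_pow_le_cut_rpow hω q L] with N hN₀ hq hcoeff
  exact hA.noRelation_largeIndices hn hN₀ N hq hcoeff

end Discarding

/-! ### Moments of sums of dilates -/

section Dilates

variable {ι : Type*} {n : ι → ℕ} {A : ℕ → Finset ι} {C V α : ℝ}

lemma abs_sum_le_card_mul {B : Finset ι} {a : ι → ℝ} (h : ∀ k ∈ B, |a k| ≤ C) :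
    |∑ k ∈ B, a k| ≤ B.card * C := by
  rw [← nsmul_eq_mul]
  exact (Finset.abs_sum_le_sum_abs _ _).trans (Finset.sum_le_card_nsmul B _ C h)

lemma measurable_sum_comp_nsmul {F : UnitAddCircle → ℝ} (hF : Measurable F) (n : ι → ℕ)
    (B : Finset ι) : Measurable fun x => ∑ k ∈ B, F (n k • x) :=
  Finset.measurable_sum B fun k _ => hF.comp (continuous_nsmul (n k)).measurable

lemma integral_abs_sum_comp_nsmul_le (hn : ∀ k, 0 < n k) {H : UnitAddCircle → ℝ}
    (hH : Integrable H) (B : Finset ι) :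
    ∫ x, |∑ k ∈ B, H (n k • x)| ≤ B.card * ∫ x, |H x| := by
  have hdil (k : ι) : Integrable fun x => |H (n k • x)| :=
    (measurePreserving_nsmul (hn k)).integrable_comp_of_integrable (g := fun x => |H x|) hH.abs
  calc ∫ x, |∑ k ∈ B, H (n k • x)|
      ≤ ∫ x, ∑ k ∈ B, |H (n k • x)| :=
        integral_mono_of_nonneg (.of_forall fun x => abs_nonneg _)
          (integrable_finsetSum _ fun k _ => hdil k)
          (.of_forall fun x => Finset.abs_sum_le_sum_abs _ _)
    _ = B.card * ∫ x, |H x| := by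
        rw [integral_finsetSum _ fun k _ => hdil k, ← nsmul_eq_mul, ← Finset.sum_const]
        exact Finset.sum_congr rfl fun k _ =>
          integral_comp_nsmul (F := fun x => |H x|) (hn k) hH.abs.aestronglyMeasurable

lemma abs_integral_sum_comp_nsmul_pow_sub_le (hn : ∀ k, 0 < n k) {F G : UnitAddCircle → ℝ}
    (hF : Measurable F) (hG : Measurable G) (hFC : ∀ x, |F x| ≤ C) (hGC : ∀ x, |G x| ≤ C)
    (B : Finset ι) (q : ℕ) :
    |(∫ x, (∑ k ∈ B, F (n k • x)) ^ q) - ∫ x, (∑ k ∈ B, G (n k • x)) ^ q| ≤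
      q * (B.card * C) ^ (q - 1) * (B.card * ∫ x, |F x - G x|) := by
  have hC : 0 ≤ C := (abs_nonneg _).trans (hFC 0)
  have hint {H : UnitAddCircle → ℝ} (hH : Measurable H) (hHC : ∀ x, |H x| ≤ C) :
      Integrable H volume :=
    .of_bound hH.aestronglyMeasurable C (.of_forall hHC)
  refine (abs_integral_pow_sub_le (μ := volume)
    (measurable_sum_comp_nsmul hF n B).aestronglyMeasurable
    (measurable_sum_comp_nsmul hG n B).aestronglyMeasurable
    (fun x => abs_sum_le_card_mul fun k _ => hFC _)
    (fun x => abs_sum_le_card_mul fun k _ => hGC _) q).trans ?_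
  refine mul_le_mul_of_nonneg_left ?_ (by positivity)
  simp only [← Finset.sum_sub_distrib]
  exact integral_abs_sum_comp_nsmul_le hn ((hint hF hFC).sub (hint hG hGC)) B

lemma tendsto_integral_sum_pow_of_isTrigPoly (hn : ∀ k, 0 < n k)
    (hcard : Tendsto (fun N : ℕ => ((A N).card : ℝ) / N) atTop (𝓝 1))
    {D : ℕ → ℕ} {g : ℕ → UnitAddCircle → ℝ} (hg : ∀ N, IsTrigPoly (D N) (g N))
    (hC : ∀ N x, |g N x| ≤ C) (hmean : ∀ N, ∫ x, g N x = 0) {s : ℝ}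
    (hvar : Tendsto (fun N => ∫ x, g N x ^ 2) atTop (𝓝 s)) {q : ℕ}
    (hrel : ∀ᶠ N in atTop, NoRelation n (A N) q (q * D N)) :
    Tendsto (fun N : ℕ => (∫ x, (∑ k ∈ A N, g N (n k • x)) ^ q) / √N ^ q) atTop
      (𝓝 (q.factorial * gaussCoeff s q)) := by
  have hsqrt : Tendsto (fun N : ℕ => √(N : ℝ)) atTop atTop :=
    tendsto_sqrt_atTop.comp tendsto_natCast_atTop_atTop
  have hcoeff := (tendsto_coeff_momentSeries_pow hC hmean hvar hsqrt
    (c := fun N => (A N).card) (by simpa only [sq_sqrt, Nat.cast_nonneg] using hcard) q).const_mul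
      (q.factorial : ℝ)
  refine hcoeff.congr' (hrel.mono fun N hN => ?_)
  simp only [integral_pow_eq_factorial_mul_coeff, mul_div_assoc,
    (hg N).coeff_momentSeries_sum hn hN le_rfl]

lemma tendsto_integral_sum_pow_of_noRelation (hn : ∀ k, 0 < n k)
    (hcard : Tendsto (fun N : ℕ => ((A N).card : ℝ) / N) atTop (𝓝 1))
    (hcard_le : ∀ N, (A N).card ≤ N)
    (hrel : ∀ q L : ℕ, ∀ᶠ N in atTop, NoRelation n (A N) q (q * N ^ L))
    {F : UnitAddCircle → ℝ} (hF : Measurable F) (hC : ∀ x, |F x| ≤ C) (hF0 : ∫ x, F x = 0)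
    (hα : 0 < α) (hmod : ∀ t, ∫ x, |F (x + t) - F x| ≤ V * ‖t‖ ^ α) (q : ℕ) :
    Tendsto (fun N : ℕ => (∫ x, (∑ k ∈ A N, F (n k • x)) ^ q) / √N ^ q) atTop
      (𝓝 (q.factorial * gaussCoeff (∫ x, F x ^ 2) q)) := by
  obtain ⟨L, W, h⟩ := exists_isTrigPoly_integral_abs_sub_le hF hC hF0 hα hmod (q + 1)
  choose g hg hgC hg0 hgF using h
  have hgm (N : ℕ) : Measurable (g N) := (hg N).continuous.measurable
  have hsmooth : Tendsto (fun N : ℕ => (∫ x, (∑ k ∈ A N, g N (n k • x)) ^ q) / √N ^ q) atTop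
      (𝓝 (q.factorial * gaussCoeff (∫ x, F x ^ 2) q)) := by
    refine tendsto_integral_sum_pow_of_isTrigPoly hn hcard hg hgC hg0 ?_ (hrel q L)
    refine tendsto_integral_pow_of_tendsto_integral_abs_sub
      (fun N => (hgm N).aestronglyMeasurable) hF.aestronglyMeasurable hgC hC ?_ 2
    exact squeeze_zero' (.of_forall fun N => integral_nonneg fun x => abs_nonneg _)
      ((eventually_gt_atTop 0).mono hgF) (tendsto_const_div_pow W (q + 1) q.succ_ne_zero)
  have hdiff : Tendsto (fun N : ℕ => (∫ x, (∑ k ∈ A N, g N (n k • x)) ^ q) / √N ^ q -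
      (∫ x, (∑ k ∈ A N, F (n k • x)) ^ q) / √N ^ q) atTop (𝓝 0) := by
    refine squeeze_zero_norm' ?_ (tendsto_const_div_atTop_nhds_zero_nat (q * C ^ (q - 1) * W))
    filter_upwards [eventually_gt_atTop 0] with N hN
    have hN1 : (1 : ℝ) ≤ N := by exact_mod_cast hN
    have hsqrt : 1 ≤ √(N : ℝ) ^ q := one_le_pow₀ (one_le_sqrt.2 hN1)
    rw [← sub_div, Real.norm_eq_abs, abs_div, abs_of_pos (zero_lt_one.trans_le hsqrt)]
    refine (div_le_self (abs_nonneg _) hsqrt).trans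
      ((abs_integral_sum_comp_nsmul_pow_sub_le hn (hgm N) hF (hgC N) hC (A N) q).trans ?_)
    calc q * ((A N).card * C) ^ (q - 1) * ((A N).card * ∫ x, |g N x - F x|)
        ≤ q * (N * C) ^ (q - 1) * (N * (W / N ^ (q + 1))) := by
          have := (abs_nonneg _).trans (hC 0)
          gcongr
          exacts [hcard_le N, hcard_le N, hgF N hN]
      _ = q * C ^ (q - 1) * W / N := by
          rcases q with _ | q
          · simp
          · rw [Nat.add_sub_cancel]
            field_simp
            ring
  simpa using hsmooth.sub hdiff

lemma tendsto_integral_sum_div_sqrt_pow_largeIndices {ω : ℕ → ℝ} {n : ℕ → ℕ} (hA : CondA ω n)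
    (hω : Tendsto ω atTop atTop) (hn_pos : ∀ k, 0 < n k) (hn_inj : Function.Injective n)
    {F : UnitAddCircle → ℝ} (hF : Measurable F) (hC : ∀ x, |F x| ≤ C) (hF0 : ∫ x, F x = 0)
    (hα : 0 < α) (hmod : ∀ t, ∫ x, |F (x + t) - F x| ≤ V * ‖t‖ ^ α) (q : ℕ) :
    Tendsto (fun N : ℕ => ∫ x, ((∑ k ∈ largeIndices n (cut N) N, F (n k • x)) / √N) ^ q) atTop
      (𝓝 (q.factorial * gaussCoeff (∫ x, F x ^ 2) q)) := by
  simp only [div_pow, integral_div]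
  exact tendsto_integral_sum_pow_of_noRelation hn_pos (tendsto_card_largeIndices_div hn_inj)
    (fun N => le_of_add_le_right (card_smallIndices_add_card_largeIndices n (cut N) N).le)
    (hA.eventually_noRelation_largeIndices hω hn_pos) hF hC hF0 hα hmod q

lemma tendsto_integral_sum_div_sqrt_pow {ω : ℕ → ℝ} {n : ℕ → ℕ} (hA : CondA ω n)
    (hω : Tendsto ω atTop atTop) (hn_pos : ∀ k, 0 < n k) (hn_inj : Function.Injective n)
    {F : UnitAddCircle → ℝ} (hF : Measurable F) (hC : ∀ x, |F x| ≤ C) (hF0 : ∫ x, F x = 0)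
    (hα : 0 < α) (hmod : ∀ t, ∫ x, |F (x + t) - F x| ≤ V * ‖t‖ ^ α) (q : ℕ) :
    Tendsto (fun N : ℕ => ∫ x, ((∑ k ∈ Finset.range N, F (n k • x)) / √N) ^ q) atTop
      (𝓝 (q.factorial * gaussCoeff (∫ x, F x ^ 2) q)) := by
  have hint (B : Finset ℕ) (N q : ℕ) :
      Integrable fun x => ((∑ k ∈ B, F (n k • x)) / √N) ^ q := by
    refine integrable_pow_of_abs_le (C := B.card * C / √N)
      ((measurable_sum_comp_nsmul hF n B).div_const _).aestronglyMeasurable (fun x => ?_) q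
    rw [abs_div, abs_of_nonneg (Real.sqrt_nonneg _)]
    gcongr
    exact abs_sum_le_card_mul fun k _ => hC _
  have hcut : Tendsto (fun N : ℕ => cut N / √N * C) atTop (𝓝 0) := by
    simpa using tendsto_cut_div_sqrt.mul_const C
  refine tendsto_integral_pow_of_abs_sub_le (fun N => hint (largeIndices n (cut N) N) N)
    (fun N => hint (Finset.range N) N) hcut (fun N x => ?_)
    (tendsto_integral_sum_div_sqrt_pow_largeIndices hA hω hn_pos hn_inj hF hC hF0 hα hmod) q
  rw [← sum_smallIndices_add_sum_largeIndices n (cut N), ← sub_div, add_sub_cancel_right, abs_div,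
    abs_of_nonneg (Real.sqrt_nonneg _), div_mul_eq_mul_div]
  have := (abs_nonneg _).trans (hC 0)
  gcongr
  refine (abs_sum_le_card_mul fun k _ => hC _).trans ?_
  gcongr
  exact card_smallIndices_le hn_inj _ N

end Dilates

/-! ### From the circle to the real line -/

section RealLine

variable {f : ℝ → ℝ}

lemma measurable_periodicLift (hf : Function.Periodic f 1) (hf_meas : Measurable f) :
    Measurable (hf.lift : UnitAddCircle → ℝ) :=
  QuotientAddGroup.measurable_from_quotient.2 hf_meas

lemma intervalIntegral_coe_unitAddCircle (G : UnitAddCircle → ℝ) :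
    ∫ x in (0 : ℝ)..1, G x = ∫ x, G x := by
  simpa only [zero_add] using UnitAddCircle.intervalIntegral_preimage 0 G

lemma integral_abs_comp_add_neg_sub (F : UnitAddCircle → ℝ) (t : UnitAddCircle) :
    ∫ x, |F (x + -t) - F x| = ∫ x, |F (x + t) - F x| := by
  rw [← integral_add_right_eq_self (fun x => |F (x + -t) - F x|) t]
  simp only [add_neg_cancel_right, abs_sub_comm]

lemma integral_abs_periodicLift_add_sub_le (hf : Function.Periodic f 1) {V α : ℝ}
    (hmod : ∀ t ∈ Set.Icc (0 : ℝ) 1, ∫ x in (0 : ℝ)..1, |f (x + t) - f x| ≤ V * t ^ α)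
    (t : UnitAddCircle) : ∫ x, |hf.lift (x + t) - hf.lift x| ≤ V * ‖t‖ ^ α := by
  obtain ⟨y, rfl, hnorm, hy⟩ := exists_coe_eq_and_norm_eq_abs t
  have habs : ∫ x, |hf.lift (x + (|y| : ℝ)) - hf.lift x| ≤ V * |y| ^ α := by
    rw [← intervalIntegral_coe_unitAddCircle]
    simp only [← AddCircle.coe_add, hf.lift_coe]
    exact hmod _ ⟨abs_nonneg y, hy.trans (by norm_num)⟩
  rw [hnorm]
  rcases abs_choice y with h | h
  · rwa [h] at habs ⊢
  · rwa [← integral_abs_comp_add_neg_sub, ← AddCircle.coe_neg, ← h]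

lemma factorial_mul_gaussCoeff_div_sqrt_pow {s : ℝ} (hs : 0 < s) (p : ℕ) :
    p.factorial * gaussCoeff s p / √s ^ p =
      if Even p then (p.factorial : ℝ) / ((p / 2).factorial * 2 ^ (p / 2)) else 0 := by
  unfold gaussCoeff
  split_ifs with h
  · obtain ⟨r, rfl⟩ := h.two_dvd
    rw [pow_mul √s, sq_sqrt hs.le, Nat.mul_div_cancel_left r two_pos]
    field_simp
  · simp

end RealLine

/-! ### Functions of bounded variation -/

section BoundedVariation

variable {f : ℝ → ℝ}

lemma exists_abs_le_of_boundedVariationOn (hf : Function.Periodic f 1)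
    (hf_bv : BoundedVariationOn f (Set.Icc 0 1)) : ∃ C, ∀ x, |f x| ≤ C := by
  refine ⟨|f 0| + (eVariationOn f (Set.Icc 0 1)).toReal, fun x => ?_⟩
  obtain ⟨y, hy, hxy⟩ := hf.exists_mem_Ico₀ one_pos x
  have hdist := hf_bv.dist_le ⟨hy.1, hy.2.le⟩ (Set.left_mem_Icc.2 zero_le_one)
  rw [Real.dist_eq] at hdist
  rw [hxy]
  linarith [abs_sub_abs_le_abs_sub (f y) (f 0)]

lemma boundedVariationOn_Icc_zero_two (hf : Function.Periodic f 1)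
    (hf_bv : BoundedVariationOn f (Set.Icc 0 1)) : BoundedVariationOn f (Set.Icc 0 2) := by
  have hshift : eVariationOn f (Set.Icc 1 2) ≤ eVariationOn f (Set.Icc 0 1) := by
    have hcomp : f ∘ (fun x => x - 1) = f := funext hf.sub_eq
    simpa only [hcomp] using eVariationOn.comp_le_of_monotoneOn f (s := Set.Icc 0 1)
      (t := Set.Icc 1 2) (fun x : ℝ => x - 1) (fun x _ y _ hxy => sub_le_sub_right hxy 1)
      fun x hx => ⟨by linarith [hx.1], by linarith [hx.2]⟩
  have hadd := eVariationOn.Icc_add_Icc f (s := Set.univ) (a := (0 : ℝ)) (b := 1) (c := 2)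
    zero_le_one one_le_two (Set.mem_univ _)
  simp only [Set.univ_inter] at hadd
  rw [BoundedVariationOn, ← hadd]
  exact ENNReal.add_ne_top.2 ⟨hf_bv, ne_top_of_le_ne_top hf_bv hshift⟩

lemma exists_integral_abs_comp_add_right_sub_le (hf : Function.Periodic f 1)
    (hf_bv : BoundedVariationOn f (Set.Icc 0 1)) :
    ∃ V, ∀ t ∈ Set.Icc (0 : ℝ) 1, ∫ x in (0 : ℝ)..1, |f (x + t) - f x| ≤ V * t := by
  have hloc := (boundedVariationOn_Icc_zero_two hf hf_bv).locallyBoundedVariationOn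
  have h0 : (0 : ℝ) ∈ Set.Icc (0 : ℝ) 2 := Set.left_mem_Icc.2 zero_le_two
  set v := variationOnFromTo f (Set.Icc 0 2) 0
  have hv : MonotoneOn v (Set.Icc 0 2) := variationOnFromTo.monotoneOn hloc h0
  refine ⟨v 2 - v 0, fun t ht => ?_⟩
  have h12 : 1 + t ≤ 2 := by linarith [ht.2]
  have hvt : MonotoneOn v (Set.Icc 0 (1 + t)) := hv.mono (Set.Icc_subset_Icc_right h12)
  have hfv : ∀ x ∈ Set.Icc (0 : ℝ) 1, |f (x + t) - f x| ≤ t * slope v x (x + t) := fun x hx => by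
    have hslope : t * slope v x (x + t) = v (x + t) - v x := by
      simpa using sub_smul_slope v x (x + t)
    rw [hslope]
    exact variationOnFromTo.abs_sub_le_sub_of_le hloc h0 ⟨hx.1, by linarith [hx.2]⟩
      ⟨by linarith [hx.1, ht.1], by linarith [hx.2]⟩ (le_add_of_nonneg_right ht.1)
  calc ∫ x in (0 : ℝ)..1, |f (x + t) - f x|
      ≤ ∫ x in (0 : ℝ)..1, t * slope v x (x + t) := by
        simp only [intervalIntegral.integral_of_le zero_le_one]
        have hint := ((hvt.intervalIntegrable_slope zero_le_one ht.1).const_mul t).1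
        refine integral_mono_of_nonneg (.of_forall fun x => abs_nonneg _) hint ?_
        exact (ae_restrict_mem measurableSet_Ioc).mono
          fun x hx => hfv x (Set.Ioc_subset_Icc_self hx)
    _ = t * ∫ x in (0 : ℝ)..1, slope v x (x + t) := intervalIntegral.integral_const_mul _ _
    _ ≤ t * (v (1 + t) - v 0) :=
        mul_le_mul_of_nonneg_left (hvt.intervalIntegral_slope_le zero_le_one ht.1) ht.1
    _ ≤ (v 2 - v 0) * t := by
        rw [mul_comm]
        gcongr
        · exact ht.1
        · exact hv ⟨by linarith [ht.1], h12⟩ (Set.right_mem_Icc.2 zero_le_two) h12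

end BoundedVariation

theorem statement12_general (ω : ℕ → ℝ) (hω_top : Tendsto ω atTop atTop)
    (n : ℕ → ℕ) (hn_pos : ∀ k, 0 < n k) (hn_inj : Function.Injective n) (hA : CondA ω n)
    (f : ℝ → ℝ) (hf_meas : Measurable f) (hf_per : ∀ x, f (x + 1) = f x)
    (hf_int : ∫ x in (0 : ℝ)..1, f x = 0) {C : ℝ} (hf_bdd : ∀ x, |f x| ≤ C)
    {V α : ℝ} (hα : 0 < α)
    (hf_mod : ∀ t ∈ Set.Icc (0 : ℝ) 1, ∫ x in (0 : ℝ)..1, |f (x + t) - f x| ≤ V * t ^ α)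
    (hf_norm : 0 < ∫ x in (0 : ℝ)..1, f x ^ 2) (p : ℕ) :
    Tendsto (fun N : ℕ =>
        ∫ x in (0 : ℝ)..1,
          ((∑ k ∈ Finset.range N, f (n k * x)) /
            (Real.sqrt (∫ x in (0 : ℝ)..1, f x ^ 2) * Real.sqrt N)) ^ p)
      atTop
      (𝓝 (if Even p then (p.factorial : ℝ) / ((p / 2).factorial * 2 ^ (p / 2)) else 0)) := by
  have hf : Function.Periodic f 1 := hf_per
  have hbdd : ∀ x, |hf.lift x| ≤ C := QuotientAddGroup.forall_mk.2 hf_bdd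
  have hint : ∫ x, hf.lift x = 0 := by
    simpa only [← intervalIntegral_coe_unitAddCircle, hf.lift_coe] using hf_int
  have hlim := (tendsto_integral_sum_div_sqrt_pow hA hω_top hn_pos hn_inj
    (measurable_periodicLift hf hf_meas) hbdd hint hα
    (integral_abs_periodicLift_add_sub_le hf hf_mod) p).div_const
      (√(∫ x in (0 : ℝ)..1, f x ^ 2) ^ p)
  simp only [← intervalIntegral_coe_unitAddCircle, ← AddCircle.coe_nsmul, nsmul_eq_mul,
    hf.lift_coe, factorial_mul_gaussCoeff_div_sqrt_pow hf_norm] at hlim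
  refine hlim.congr fun N => ?_
  simp only [← intervalIntegral.integral_div, ← div_pow, div_div, mul_comm √(N : ℝ)]

/-- Under Condition `A_ω`, with `‖f‖ > 0` and `S_N(x) = ∑_{k<N} f(n_k x)`, the `p`-th moment
`∫₀¹ (S_N/(‖f‖√N))^p dx` converges, as `N → ∞`, to the `p`-th moment of the standard normal
law: `p!/((p/2)! 2^{p/2})` for even `p` and `0` for odd `p`. -/
theorem statement12
    (ω : ℕ → ℝ) (hω_pos : ∀ k, 0 < ω k) (hω_mono : Monotone ω)
    (hω_top : Tendsto ω atTop atTop)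
    (n : ℕ → ℕ) (hn_pos : ∀ k, 0 < n k) (hn_inj : Function.Injective n)
    (hA : CondA ω n)
    (f : ℝ → ℝ) (hf_meas : Measurable f)
    (hf_per : ∀ x, f (x + 1) = f x)
    (hf_int : ∫ x in (0:ℝ)..1, f x = 0)
    (hf_bv : BoundedVariationOn f (Set.Icc 0 1))
    (hf_norm : 0 < ∫ x in (0:ℝ)..1, f x ^ 2) :
    ∀ p : ℕ, 1 ≤ p →
      Tendsto (fun N : ℕ =>
          ∫ x in (0:ℝ)..1,
            ((∑ k ∈ Finset.range N, f (n k * x)) /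
              (Real.sqrt (∫ x in (0:ℝ)..1, f x ^ 2) * Real.sqrt N)) ^ p)
        atTop
        (𝓝 (if Even p then (p.factorial : ℝ) / ((p / 2).factorial * 2 ^ (p / 2)) else 0)) := by
  intro p _
  obtain ⟨C, hC⟩ := exists_abs_le_of_boundedVariationOn hf_per hf_bv
  obtain ⟨V, hV⟩ := exists_integral_abs_comp_add_right_sub_le hf_per hf_bv
  exact statement12_general ω hω_top n hn_pos hn_inj hA f hf_meas hf_per hf_int hC one_pos
    (by simpa only [rpow_one] using hV) hf_norm p
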